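/- arXiv:2510.25149 — 7 statements merged into one kernel-verified Lean document; each statement's English description precedes it below -/
import Mathlib

section
/- Let k be a field, Γ a group, and φ : Γ →* SL(2, k) a group homomorphism into the special linear group of 2×2 matrices over k. Suppose φ is reducible, i.e., there is a one-dimensional k-subspace L of k² such that (φ γ) v ∈ L for every γ ∈ Γ and v ∈ L. If g and h are conjugate elements of Γ (h = w g w⁻¹ for some w ∈ Γ), then either tr(φ(g·h)) = 2 or tr(φ(g·h)) = tr(φ(g))² − 2. -/
/-!
A group acts on an invariant line through a character, and a character takes equal values on
conjugate elements. So if `A` and `B` are the images of `g` and `h`, they share an eigenvector with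
a common eigenvalue `a`, and `A - a` and `B - a` are singular with a common kernel vector. Their sum
is then singular too, so the polarization of the `2 × 2` determinant gives
`tr ((A - a) * (B - a)) = tr (A - a) * tr (B - a)`. Since `tr A = tr B` and the other eigenvalue
`tr A - a` satisfies `a * (tr A - a) = det A`, this rearranges to
`tr (A * B) = a ^ 2 + (tr A - a) ^ 2 = (tr A) ^ 2 - 2 * det A`.
-/

section Matrix

variable {R n : Type*} [CommRing R] [Fintype n] [DecidableEq n]

theorem matrix_trace_eq_of_isConj {A B : Matrix n n R} (h : IsConj A B) : A.trace = B.trace := by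
  obtain ⟨c, hc⟩ := h
  rw [← (Units.mul_inv_eq_iff_eq_mul c).mpr hc.eq, Matrix.trace_units_conj]

theorem sub_smul_one_mulVec_eq_zero {A : Matrix n n R} {v : n → R} {a : R}
    (h : A.mulVec v = a • v) : (A - a • 1).mulVec v = 0 := by
  rw [Matrix.sub_mulVec, Matrix.smul_mulVec, Matrix.one_mulVec, h, sub_self]

end Matrix

section TwoByTwo

variable {R : Type*} [CommRing R]

theorem det_add_fin_two (A B : Matrix (Fin 2) (Fin 2) R) :
    (A + B).det = A.det + B.det + A.trace * B.trace - (A * B).trace := by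
  simp only [Matrix.det_fin_two, Matrix.trace_fin_two, Matrix.add_apply, Matrix.mul_apply,
    Fin.sum_univ_two]
  ring

theorem det_sub_smul_one_fin_two (A : Matrix (Fin 2) (Fin 2) R) (a : R) :
    (A - a • 1).det = A.det - a * (A.trace - a) := by
  rw [sub_eq_add_neg, ← neg_smul, det_add_fin_two]
  simp only [Matrix.det_smul, Matrix.det_one, Matrix.trace_smul, Matrix.trace_one, Matrix.mul_smul,
    mul_one, Fintype.card_fin, Nat.cast_ofNat, smul_eq_mul]
  ring

variable [IsDomain R] {v : Fin 2 → R}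

theorem trace_mul_of_mulVec_eq_zero {A B : Matrix (Fin 2) (Fin 2) R} (hv : v ≠ 0)
    (hA : A.mulVec v = 0) (hB : B.mulVec v = 0) :
    (A * B).trace = A.trace * B.trace := by
  have det_eq_zero {M : Matrix (Fin 2) (Fin 2) R} (hM : M.mulVec v = 0) : M.det = 0 :=
    Matrix.exists_mulVec_eq_zero_iff.mp ⟨v, hv, hM⟩
  have polarization := det_add_fin_two A B
  rw [det_eq_zero hA, det_eq_zero hB,
    det_eq_zero (by rw [Matrix.add_mulVec, hA, hB, add_zero])] at polarization
  linear_combination polarization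

theorem mul_trace_sub_eq_det {A : Matrix (Fin 2) (Fin 2) R} {a : R} (hv : v ≠ 0)
    (hA : A.mulVec v = a • v) : a * (A.trace - a) = A.det := by
  have singular : (A - a • 1).det = 0 :=
    Matrix.exists_mulVec_eq_zero_iff.mp ⟨v, hv, sub_smul_one_mulVec_eq_zero hA⟩
  rw [det_sub_smul_one_fin_two] at singular
  exact (sub_eq_zero.mp singular).symm

theorem trace_mul_of_mulVec_eq_smul {A B : Matrix (Fin 2) (Fin 2) R} {a b : R} (hv : v ≠ 0)
    (hA : A.mulVec v = a • v) (hB : B.mulVec v = b • v) :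
    (A * B).trace = a * b + (A.trace - a) * (B.trace - b) := by
  have shifted := trace_mul_of_mulVec_eq_zero hv (sub_smul_one_mulVec_eq_zero hA)
    (sub_smul_one_mulVec_eq_zero hB)
  simp only [sub_mul, mul_sub, Matrix.smul_mul, Matrix.mul_smul, one_mul, mul_one,
    Matrix.trace_sub, Matrix.trace_smul, Matrix.trace_one, Fintype.card_fin, Nat.cast_ofNat,
    smul_eq_mul] at shifted ⊢
  linear_combination shifted

end TwoByTwo

section RankOne

variable {R : Type*} [CommRing R] [Nontrivial R]

theorem apply_eq_det_smul_of_finrank_eq_one {M : Type*} [AddCommGroup M] [Module R M]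
    [Module.Free R M] (hM : Module.finrank R M = 1) (f : Module.End R M) (x : M) :
    f x = LinearMap.det f • x := by
  obtain ⟨c, rfl, -⟩ := LinearMap.existsUnique_eq_smul_id_of_finrank_eq_one hM f
  simp [hM]

theorem exists_monoidHom_apply_eq_smul {G V : Type*} [Monoid G] [AddCommGroup V] [Module R V]
    {ρ : Representation R G V} (σ : Subrepresentation ρ) [Module.Free R σ.toSubmodule]
    (hσ : Module.finrank R σ.toSubmodule = 1) :
    ∃ χ : G →* R, ∀ g, ∀ v ∈ σ.toSubmodule, ρ g v = χ g • v :=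
  ⟨LinearMap.det.comp σ.toRepresentation, fun g v hv ↦
    congrArg Subtype.val (apply_eq_det_smul_of_finrank_eq_one hσ (σ.toRepresentation g) ⟨v, hv⟩)⟩

end RankOne

theorem reducible_trace_of_conj_general {R : Type*} [CommRing R] [IsDomain R] {Γ : Type*}
    [Monoid Γ] (φ : Γ →* Matrix (Fin 2) (Fin 2) R) (L : Submodule R (Fin 2 → R))
    [Module.Free R L] (hL : Module.finrank R L = 1)
    (hinv : ∀ γ : Γ, ∀ v ∈ L, (φ γ).mulVec v ∈ L) {g h : Γ} (hconj : IsConj g h) :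
    (φ (g * h)).trace = (φ g).trace ^ 2 - 2 * (φ g).det := by
  let ρ : Representation R Γ (Fin 2 → R) :=
    (Matrix.toLinAlgEquiv' : Matrix (Fin 2) (Fin 2) R ≃ₐ[R] _).toMonoidHom.comp φ
  obtain ⟨χ, hχ⟩ := exists_monoidHom_apply_eq_smul (ρ := ρ) ⟨L, hinv⟩ hL
  have eigen (γ : Γ) {v : Fin 2 → R} (hv : v ∈ L) : (φ γ).mulVec v = χ γ • v := hχ γ v hv
  obtain ⟨v, hvL, hv⟩ : ∃ v ∈ L, v ≠ 0 :=
    L.exists_mem_ne_zero_of_ne_bot (by rintro rfl; simp at hL)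
  have χ_eq : χ h = χ g := (isConj_iff_eq.mp (χ.map_isConj hconj)).symm
  have trace_eq : (φ h).trace = (φ g).trace := (matrix_trace_eq_of_isConj (φ.map_isConj hconj)).symm
  have det_eq : χ g * ((φ g).trace - χ g) = (φ g).det := mul_trace_sub_eq_det hv (eigen g hvL)
  calc (φ (g * h)).trace
      = χ g * χ h + ((φ g).trace - χ g) * ((φ h).trace - χ h) := by
        rw [map_mul, trace_mul_of_mulVec_eq_smul hv (eigen g hvL) (eigen h hvL)]
    _ = (φ g).trace ^ 2 - 2 * (χ g * ((φ g).trace - χ g)) := by rw [χ_eq, trace_eq]; ring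
    _ = (φ g).trace ^ 2 - 2 * (φ g).det := by rw [det_eq]

/-- If a representation `φ : Γ → SL(2,k)` is reducible (preserves a one-dimensional
subspace `L` of `k²`), and `g, h` are conjugate elements of `Γ`, then either
`tr(φ(g*h)) = 2` or `tr(φ(g*h)) = tr(φ(g))² - 2`. -/
theorem reducible_trace_of_conj {k : Type*} [Field k] {Γ : Type*} [Group Γ]
    (φ : Γ →* Matrix.SpecialLinearGroup (Fin 2) k)
    (L : Submodule k (Fin 2 → k)) (hL : Module.finrank k L = 1)
    (hinv : ∀ γ : Γ, ∀ v ∈ L, ((φ γ : Matrix (Fin 2) (Fin 2) k)).mulVec v ∈ L)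
    (g h w : Γ) (hconj : h = w * g * w⁻¹) :
    Matrix.trace ((φ (g * h) : Matrix (Fin 2) (Fin 2) k)) = 2 ∨
    Matrix.trace ((φ (g * h) : Matrix (Fin 2) (Fin 2) k)) =
      (Matrix.trace ((φ g : Matrix (Fin 2) (Fin 2) k)))^2 - 2 := by
  have hgh : IsConj g h := isConj_iff.mpr ⟨w, hconj.symm⟩
  right
  simpa using reducible_trace_of_conj_general (Matrix.SpecialLinearGroup.coeMonoidHom.comp φ)
    L hL hinv hgh
end

section
/- Let F be a field of characteristic different from 2, let c₁, c₂ ∈ F, and let m, n ∈ ℍ[F, c₁, c₂] with Nrd m = 1 and Nrd n = 1. Set t := 2·m.re, u := 2·n.re, w := 2·(m·n).re, and assume t² ≠ 4. Define i := 2·m − t·1, j' := 2·n − u·1, Q := (2w − t·u)/(t² − 4), and j := −i·(j' − Q·i). Then: (a) i·i = (t² − 4)·1; (b) j·j = (−(t² − 4)(u² − 4) + (2w − t·u)²)·1; (c) i·j = −(j·i). -/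
open Quaternion

/-!
The elements `i = 2m - t` and `j' = 2n - u` have trace zero, so `i²`, `j'²` and `ij' + j'i` are
scalars: the first two by the quadratic equation `m² = tm - Nrd m`, the last by its polarization,
which comes from expanding `mn + star n * star m = w` with `star m = t - m` and `star n = u - n`.
The scalar `Q` is the Gram–Schmidt coefficient making `j' - Qi` orthogonal to `i` for the
polarized form, i.e. anticommuting with `i`. Left multiplication by `i` preserves anticommutation
with `i`, and `(ix)² = -i²x²` whenever `x` anticommutes with `i`.
-/

section Anticommuting

variable {S : Type*} [Semigroup S] [HasDistribNeg S] {x y : S}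

theorem mul_mul_self_of_anticommute (h : x * y = -(y * x)) :
    x * y * (x * y) = -(x * x * (y * y)) :=
  calc x * y * (x * y) = x * (y * x) * y := by simp only [mul_assoc]
    _ = -(x * x * (y * y)) := by
      rw [← neg_eq_iff_eq_neg.mpr h]
      simp only [mul_neg, neg_mul, mul_assoc]

theorem anticommute_mul_left (h : x * y = -(y * x)) : x * (x * y) = -(x * y * x) := by
  rw [mul_assoc, ← mul_neg, ← h]

end Anticommuting

section QuadraticElements

variable {R A : Type*} [CommRing R] [Ring A] [Algebra R A]

theorem two_mul_sub_smul_one_mul_self {m : A} {t a : R} (hm : m * m = t • m - a • 1) :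
    (2 * m - t • 1) * (2 * m - t • 1) = (t ^ 2 - 4 * a) • (1 : A) := by
  simp only [two_mul, sub_mul, mul_sub, add_mul, mul_add, smul_mul_assoc, mul_smul_comm, one_mul,
    mul_one, hm]
  module

theorem two_mul_sub_smul_one_mul_add_mul {m n : A} {t u w : R}
    (hmn : m * n + n * m = u • m + t • n + (w - t * u) • 1) :
    (2 * m - t • 1) * (2 * n - u • 1) + (2 * n - u • 1) * (2 * m - t • 1) =
      (2 * (2 * w - t * u)) • (1 : A) := by
  simp only [two_mul, sub_mul, mul_sub, add_mul, mul_add, smul_mul_assoc, mul_smul_comm, one_mul,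
    mul_one, eq_sub_of_add_eq hmn]
  module

variable {x y : A} {α β γ q : R}

theorem anticommute_sub_smul (hx : x * x = α • 1) (hxy : x * y + y * x = (2 * γ) • 1)
    (hq : q * α = γ) : x * (y - q • x) = -((y - q • x) * x) := by
  rw [← hq] at hxy
  simp only [mul_sub, sub_mul, smul_mul_assoc, mul_smul_comm, hx, eq_sub_of_add_eq hxy]
  module

theorem sub_smul_mul_self (hx : x * x = α • 1) (hy : y * y = β • 1)
    (hxy : x * y + y * x = (2 * γ) • 1) (hq : q * α = γ) :
    (y - q • x) * (y - q • x) = (β - q * γ) • 1 := by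
  rw [← hq] at hxy ⊢
  simp only [mul_sub, sub_mul, smul_mul_assoc, mul_smul_comm, hx, hy, eq_sub_of_add_eq hxy]
  module

theorem mul_sub_smul_mul_self (hx : x * x = α • 1) (hy : y * y = β • 1)
    (hxy : x * y + y * x = (2 * γ) • 1) (hq : q * α = γ) :
    x * (y - q • x) * (x * (y - q • x)) = (-α * β + γ ^ 2) • 1 := by
  rw [mul_mul_self_of_anticommute (anticommute_sub_smul hx hxy hq), hx,
    sub_smul_mul_self hx hy hxy hq, smul_mul_smul_comm, mul_one, ← neg_smul]
  congr 1
  linear_combination γ * hq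

end QuadraticElements

section ReducedTrace

variable {R A : Type*} [CommRing R] [Ring A] [Algebra R A]

theorem mul_self_of_self_add_star [Star A] {m : A} {t a : R} (htr : m + star m = t • 1)
    (hnorm : m * star m = a • 1) : m * m = t • m - a • 1 := by
  rw [← hnorm, eq_sub_of_add_eq' htr, mul_sub, mul_smul_comm, mul_one, sub_sub_cancel]

theorem mul_add_mul_of_self_add_star [StarMul A] {m n : A} {t u w : R}
    (hm : m + star m = t • 1) (hn : n + star n = u • 1) (hmn : m * n + star (m * n) = w • 1) :
    m * n + n * m = u • m + t • n + (w - t * u) • 1 := by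
  rw [star_mul, eq_sub_of_add_eq' hm, eq_sub_of_add_eq' hn] at hmn
  simp only [mul_sub, sub_mul, smul_mul_assoc, mul_smul_comm, one_mul, mul_one] at hmn
  linear_combination (norm := module) hmn

theorem symbol_generators_squares_general [StarMul A] {m n : A} {t u w a b : R}
    (hm : m * star m = a • 1) (hn : n * star n = b • 1)
    (ht : m + star m = t • 1) (hu : n + star n = u • 1) (hw : m * n + star (m * n) = w • 1)
    {i j' j : A} {Q : R} (hi : i = 2 * m - t • 1) (hj' : j' = 2 * n - u • 1)
    (hQ : Q * (t ^ 2 - 4 * a) = 2 * w - t * u) (hj : j = -(i * (j' - Q • i))) :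
    i * i = (t ^ 2 - 4 * a) • (1 : A) ∧
    j * j = (-(t ^ 2 - 4 * a) * (u ^ 2 - 4 * b) + (2 * w - t * u) ^ 2) • (1 : A) ∧
    i * j = -(j * i) := by
  have hii : i * i = (t ^ 2 - 4 * a) • (1 : A) :=
    hi ▸ two_mul_sub_smul_one_mul_self (mul_self_of_self_add_star ht hm)
  have hjj : j' * j' = (u ^ 2 - 4 * b) • (1 : A) :=
    hj' ▸ two_mul_sub_smul_one_mul_self (mul_self_of_self_add_star hu hn)
  have hij : i * j' + j' * i = (2 * (2 * w - t * u)) • (1 : A) :=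
    hi ▸ hj' ▸ two_mul_sub_smul_one_mul_add_mul (mul_add_mul_of_self_add_star ht hu hw)
  refine ⟨hii, ?_, ?_⟩
  · rw [hj, neg_mul_neg, mul_sub_smul_mul_self hii hjj hij hQ]
  · rw [hj, mul_neg, neg_mul, anticommute_mul_left (anticommute_sub_smul hii hij hQ)]

end ReducedTrace

theorem self_add_star_eq_two_mul_re_smul_one {R : Type*} [CommRing R] {c₁ c₂ : R}
    (x : ℍ[R,c₁,c₂]) : x + star x = (2 * x.re) • 1 := by
  rw [x.self_add_star', zero_mul, add_zero, ← QuaternionAlgebra.coe_mul_eq_smul, mul_one]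

/-- Orthogonalization producing a symbol-algebra presentation: squares and
anticommutation of the elements `i` and `j`. -/
theorem symbol_generators_squares {F : Type*} [Field F] (h2 : (2 : F) ≠ 0)
    (c₁ c₂ : F) (m n : ℍ[F, c₁, c₂])
    (hm : m * star m = 1) (hn : n * star n = 1)
    (t u w : F) (ht : t = 2 * m.re) (hu : u = 2 * n.re) (hw : w = 2 * (m * n).re)
    (ht4 : t ^ 2 ≠ 4)
    (i j' j : ℍ[F, c₁, c₂]) (Q : F)
    (hi : i = 2 * m - t • 1) (hj' : j' = 2 * n - u • 1)
    (hQ : Q = (2 * w - t * u) / (t ^ 2 - 4))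
    (hj : j = -(i * (j' - Q • i))) :
    i * i = (t ^ 2 - 4) • (1 : ℍ[F, c₁, c₂]) ∧
    j * j = (-(t ^ 2 - 4) * (u ^ 2 - 4) + (2 * w - t * u) ^ 2) • (1 : ℍ[F, c₁, c₂]) ∧
    i * j = -(j * i) := by
  have hQD : Q * (t ^ 2 - 4 * 1) = 2 * w - t * u := by
    rw [hQ, mul_one, div_mul_cancel₀ _ (sub_ne_zero.mpr ht4)]
  have htr := self_add_star_eq_two_mul_re_smul_one (c₁ := c₁) (c₂ := c₂)
  simpa only [mul_one] using symbol_generators_squares_general (a := 1) (b := 1)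
    (by rw [hm, one_smul]) (by rw [hn, one_smul]) (ht ▸ htr m) (hu ▸ htr n) (hw ▸ htr (m * n))
    hi hj' hQD hj
end

section
/- Let F be a field of characteristic different from 2, let c₁, c₂ ∈ F, and let m, n ∈ ℍ[F, c₁, c₂] with Nrd m = 1 and Nrd n = 1. Set t := 2·m.re, u := 2·n.re, w := 2·(m·n).re, and assume t² ≠ 4. If m and n generate ℍ[F, c₁, c₂] as an F-algebra (Algebra.adjoin F {m, n} = ⊤), then there is an F-algebra isomorphism ℍ[F, c₁, c₂] ≃ₐ[F] ℍ[F, t² − 4, −(t² − 4)(u² − 4) + (2w − t·u)²]. -/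
open Quaternion

/-!
Completing the square, `x = 2m - t` and `y = 2n - u` square to the scalars `a = t² - 4 Nrd m` and
`b = u² - 4 Nrd n`, and `xy + yx` is twice the scalar `s = 2w - tu`. Hence `xy - s` anticommutes
with `x` and squares to `s² - ab`, so that `x` and `xy - s` satisfy the relations of the standard
generators of `ℍ[F, a, s² - ab]`. Since `x(xy - s) = ay - sx` and `a` is invertible, the resulting
homomorphism hits `x` and `y`; it is surjective, hence bijective by equality of dimensions.
-/

section ScalarTraceAndNorm

variable {R A : Type*} [CommRing R] [Ring A] [Algebra R A] {m n : A} {t u w p : R}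

theorem mul_self_of_add_eq_of_mul_eq {m' : A} (htrace : m + m' = t • (1 : A))
    (hnorm : m * m' = p • (1 : A)) : m * m = t • m - p • (1 : A) := by
  rw [eq_sub_iff_add_eq, ← hnorm, ← mul_add, htrace, mul_smul_comm, mul_one]

theorem two_smul_sub_mul_self {m' : A} (htrace : m + m' = t • (1 : A))
    (hnorm : m * m' = p • (1 : A)) :
    ((2 : R) • m - t • (1 : A)) * ((2 : R) • m - t • (1 : A)) = (t ^ 2 - 4 * p) • (1 : A) := by
  simp only [sub_mul, mul_sub, smul_mul_assoc, mul_smul_comm, one_mul, mul_one,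
    mul_self_of_add_eq_of_mul_eq htrace hnorm]
  module

theorem mul_add_mul_swap_of_add_star [StarMul A] (hm : m + star m = t • (1 : A))
    (hn : n + star n = u • (1 : A)) (hmn : m * n + star (m * n) = w • (1 : A)) :
    m * n + n * m = u • m + t • n + (w - t * u) • (1 : A) := by
  rw [star_mul, eq_sub_of_add_eq' hm, eq_sub_of_add_eq' hn] at hmn
  simp only [sub_mul, mul_sub, smul_mul_assoc, mul_smul_comm, one_mul, mul_one] at hmn
  linear_combination (norm := module) hmn

theorem two_smul_sub_mul_add_mul_swap [StarMul A] (hm : m + star m = t • (1 : A))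
    (hn : n + star n = u • (1 : A)) (hmn : m * n + star (m * n) = w • (1 : A)) :
    ((2 : R) • m - t • (1 : A)) * ((2 : R) • n - u • (1 : A)) +
      ((2 : R) • n - u • (1 : A)) * ((2 : R) • m - t • (1 : A)) =
        (2 * (2 * w - t * u)) • (1 : A) := by
  have hswap := mul_add_mul_swap_of_add_star hm hn hmn
  simp only [sub_mul, mul_sub, smul_mul_assoc, mul_smul_comm, one_mul, mul_one]
  linear_combination (norm := module) (4 : R) • hswap

end ScalarTraceAndNorm

section Generation

variable {R A : Type*} [CommRing R] [Ring A] [Algebra R A] {a b s : R} {x y : A}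

/-- The quaternion basis `i = x`, `j = xy - s` attached to two elements `x`, `y` whose squares
`a`, `b` and whose anticommutator `2s` are scalars; subtracting `s` makes `j` anticommute with
`i`. -/
def quaternionBasisOfScalarSquares (hx : x * x = a • (1 : A)) (hy : y * y = b • (1 : A))
    (hxy : x * y + y * x = (2 * s) • (1 : A)) :
    QuaternionAlgebra.Basis A a 0 (-a * b + s ^ 2) :=
  have hyx : y * x = (2 * s) • (1 : A) - x * y := eq_sub_of_add_eq' hxy
  have hxxy : x * (x * y) = a • y := by rw [← mul_assoc, hx, smul_one_mul]
  have hxyx : x * y * x = (2 * s) • x - a • y := by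
    rw [mul_assoc, hyx, mul_sub, hxxy, mul_smul_comm, mul_one]
  have hxyxy : x * y * (x * y) = (2 * s) • (x * y) - (a * b) • (1 : A) := by
    rw [← mul_assoc, hxyx, sub_mul, smul_mul_assoc, smul_mul_assoc, hy, smul_smul]
  { i := x
    j := x * y - s • (1 : A)
    k := a • y - s • x
    i_mul_i := by rw [hx, zero_smul, add_zero]
    j_mul_j := by
      simp only [sub_mul, mul_sub, smul_mul_assoc, mul_smul_comm, one_mul, mul_one, hxyxy]
      module
    i_mul_j := by rw [mul_sub, hxxy, mul_smul_comm, mul_one]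
    j_mul_i := by
      rw [sub_mul, hxyx, smul_mul_assoc, one_mul]
      module }

theorem adjoin_pair_le_range_liftHom (ha : IsUnit a) (hx : x * x = a • (1 : A))
    (hy : y * y = b • (1 : A)) (hxy : x * y + y * x = (2 * s) • (1 : A)) :
    Algebra.adjoin R {x, y} ≤ (quaternionBasisOfScalarSquares hx hy hxy).liftHom.range := by
  rw [QuaternionAlgebra.Basis.range_liftHom]
  set q := quaternionBasisOfScalarSquares hx hy hxy
  set S := Algebra.adjoin R {q.i, q.j, q.k}
  have hxS : x ∈ S := Algebra.subset_adjoin (by simp [q, quaternionBasisOfScalarSquares])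
  have hkS : a • y - s • x ∈ S :=
    Algebra.subset_adjoin (by simp [q, quaternionBasisOfScalarSquares])
  have hayS : a • y ∈ S := by simpa using S.add_mem hkS (S.smul_mem hxS s)
  have hyS : y ∈ S := (S.toSubmodule.smul_mem_iff_of_isUnit ha).mp hayS
  exact Algebra.adjoin_le (Set.pair_subset hxS hyS)

theorem mem_of_smul_sub_smul_one_mem {S : Subalgebra R A} {c t : R} (hc : IsUnit c)
    (h : c • x - t • (1 : A) ∈ S) : x ∈ S := by
  have hcx : c • x ∈ S := by simpa using S.add_mem h (S.smul_mem S.one_mem t)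
  exact (S.toSubmodule.smul_mem_iff_of_isUnit hc).mp hcx

theorem adjoin_pair_le_adjoin_smul_sub_smul_one {c : R} (hc : IsUnit c) (m n : A) (t u : R) :
    Algebra.adjoin R {m, n} ≤ Algebra.adjoin R {c • m - t • (1 : A), c • n - u • (1 : A)} :=
  Algebra.adjoin_le <| Set.pair_subset
    (mem_of_smul_sub_smul_one_mem hc (Algebra.subset_adjoin (Set.mem_insert _ _)))
    (mem_of_smul_sub_smul_one_mem hc (Algebra.subset_adjoin (Set.mem_insert_of_mem _ rfl)))

end Generation

section FreeOfRankFour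

variable {R A : Type*} [CommRing R] [Nontrivial R] [Ring A] [Algebra R A] [Module.Free R A]

theorem liftHom_bijective_of_surjective {c₁ c₂ c₃ : R} (hrank : Module.finrank R A = 4)
    (q : QuaternionAlgebra.Basis A c₁ c₂ c₃) (hq : Function.Surjective q.liftHom) :
    Function.Bijective q.liftHom :=
  have : Module.Finite R A := Module.finite_of_finrank_eq_succ hrank
  OrzechProperty.bijective_of_surjective_of_finrank_le q.liftHom.toLinearMap hq
    (by rw [QuaternionAlgebra.finrank_eq_four, hrank])

theorem nonempty_algEquiv_of_scalar_squares {a b s : R} {x y : A}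
    (hrank : Module.finrank R A = 4) (ha : IsUnit a) (hx : x * x = a • (1 : A))
    (hy : y * y = b • (1 : A)) (hxy : x * y + y * x = (2 * s) • (1 : A))
    (hgen : Algebra.adjoin R {x, y} = ⊤) :
    Nonempty (A ≃ₐ[R] ℍ[R,a,-a * b + s ^ 2]) := by
  let q := quaternionBasisOfScalarSquares hx hy hxy
  have hsurj : Function.Surjective q.liftHom := by
    rw [← AlgHom.range_eq_top, eq_top_iff, ← hgen]
    exact adjoin_pair_le_range_liftHom ha hx hy hxy
  exact ⟨(AlgEquiv.ofBijective q.liftHom (liftHom_bijective_of_surjective hrank q hsurj)).symm⟩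

theorem symbol_algebra_presentation_general [StarMul A] (hrank : Module.finrank R A = 4)
    (h2 : IsUnit (2 : R)) {m n : A} {t u w p q : R}
    (htm : m + star m = t • (1 : A)) (htn : n + star n = u • (1 : A))
    (htmn : m * n + star (m * n) = w • (1 : A))
    (hm : m * star m = p • (1 : A)) (hn : n * star n = q • (1 : A))
    (hdisc : IsUnit (t ^ 2 - 4 * p)) (hgen : Algebra.adjoin R {m, n} = ⊤) :
    Nonempty (A ≃ₐ[R]
      ℍ[R,t ^ 2 - 4 * p,-(t ^ 2 - 4 * p) * (u ^ 2 - 4 * q) + (2 * w - t * u) ^ 2]) := by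
  refine nonempty_algEquiv_of_scalar_squares hrank hdisc (two_smul_sub_mul_self htm hm)
    (two_smul_sub_mul_self htn hn) (two_smul_sub_mul_add_mul_swap htm htn htmn) ?_
  rw [eq_top_iff, ← hgen]
  exact adjoin_pair_le_adjoin_smul_sub_smul_one h2 m n t u

end FreeOfRankFour

theorem quaternion_add_star_eq_smul_one {R : Type*} [CommRing R] {c₁ c₂ : R}
    (x : ℍ[R,c₁,c₂]) : x + star x = (2 * x.re) • (1 : ℍ[R,c₁,c₂]) := by
  rw [QuaternionAlgebra.self_add_star', zero_mul, add_zero, ← QuaternionAlgebra.coe_algebraMap,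
    Algebra.algebraMap_eq_smul_one]

/-- If `m` and `n` generate the quaternion algebra `ℍ[F, c₁, c₂]` over `F`, with
reduced norms `1` and `t² ≠ 4` (where `t = Trd m`), then the algebra admits the
symbol presentation `(t² - 4, -(t² - 4)(u² - 4) + (2w - tu)²)`. -/
theorem symbol_algebra_presentation {F : Type*} [Field F] (h2 : (2 : F) ≠ 0)
    (c₁ c₂ : F) (m n : ℍ[F, c₁, c₂])
    (hm : m * star m = 1) (hn : n * star n = 1)
    (t u w : F) (ht : t = 2 * m.re) (hu : u = 2 * n.re) (hw : w = 2 * (m * n).re)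
    (ht4 : t ^ 2 ≠ 4)
    (hgen : Algebra.adjoin F ({m, n} : Set ℍ[F, c₁, c₂]) = ⊤) :
    Nonempty
      (ℍ[F, c₁, c₂] ≃ₐ[F]
        ℍ[F, t ^ 2 - 4, -(t ^ 2 - 4) * (u ^ 2 - 4) + (2 * w - t * u) ^ 2]) := by
  subst ht hu hw
  have hpres := symbol_algebra_presentation_general (p := 1) (q := 1)
    (QuaternionAlgebra.finrank_eq_four _ _ _) h2.isUnit (quaternion_add_star_eq_smul_one m)
    (quaternion_add_star_eq_smul_one n) (quaternion_add_star_eq_smul_one (m * n))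
    (by rwa [one_smul]) (by rwa [one_smul]) (by rwa [mul_one, isUnit_iff_ne_zero, sub_ne_zero]) hgen
  rwa [mul_one] at hpres
end

section
/- Let F be a field of characteristic different from 2 and c₁, c₂ ∈ F, and suppose that D := ℍ[F, c₁, c₂] is a division ring. If x, y ∈ D satisfy x·y ≠ y·x, then x and y generate D as an F-algebra: Algebra.adjoin F {x, y} = ⊤. -/
open Quaternion

/-! If `p + q * y = 0` with `p`, `q` in `F + F x` and `q ≠ 0`, then `q * y` commutes with `x`, and
cancelling `q` shows that `y` does too. So for noncommuting `x` and `y` in an algebra without zero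
divisors `1, x, y, x * y` are linearly independent, and in dimension four they span. -/

theorem commute_of_commute_mul_of_ne_zero {M : Type*} [SemigroupWithZero M]
    [IsLeftCancelMulZero M] {q x y : M} (hq : q ≠ 0) (hxq : Commute x q)
    (hxqy : Commute x (q * y)) : Commute x y := by
  refine mul_left_cancel₀ hq ?_
  calc q * (x * y) = x * (q * y) := by rw [← mul_assoc, ← hxq.eq, mul_assoc]
    _ = q * (y * x) := by rw [hxqy.eq, mul_assoc]

section Independence

variable {F A : Type*} [Field F] [Ring A] [Algebra F A] {x y : A}

theorem linearIndependent_one_left_of_not_commute (hxy : ¬Commute x y) :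
    LinearIndependent F ![1, x] := by
  have : Nontrivial A := nontrivial_of_ne _ _ hxy
  refine (LinearIndependent.pair_iff' one_ne_zero).2 fun a hax ↦ hxy ?_
  exact hax ▸ (Commute.one_left y).smul_left a

theorem linearIndependent_one_left_right_mul_of_not_commute [NoZeroDivisors A]
    (hxy : ¬Commute x y) : LinearIndependent F ![1, x, y, x * y] := by
  have one_x_indep : ∀ a b : F, a • (1 : A) + b • x = 0 → a = 0 ∧ b = 0 :=
    LinearIndependent.pair_iff.1 (linearIndependent_one_left_of_not_commute hxy)
  have commute_x (a b : F) : Commute x (a • (1 : A) + b • x) :=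
    ((Commute.one_right x).smul_right a).add_right ((Commute.refl x).smul_right b)
  refine Fintype.linearIndependent_iff.2 fun g hg ↦ ?_
  have hsum : (g 0 • (1 : A) + g 1 • x) + (g 2 • (1 : A) + g 3 • x) * y = 0 := by
    simpa [Fin.sum_univ_four, add_mul, add_assoc] using hg
  have hq : g 2 • (1 : A) + g 3 • x = 0 := by
    by_contra hq
    refine hxy (commute_of_commute_mul_of_ne_zero hq (commute_x _ _) ?_)
    rw [eq_neg_of_add_eq_zero_right hsum]
    exact (commute_x _ _).neg_right
  have hp : g 0 • (1 : A) + g 1 • x = 0 := by simpa [hq] using hsum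
  obtain ⟨h0, h1⟩ := one_x_indep _ _ hp
  obtain ⟨h2, h3⟩ := one_x_indep _ _ hq
  simp [Fin.forall_fin_succ, h0, h1, h2, h3]

end Independence

theorem span_one_left_right_mul_le_adjoin_pair {R A : Type*} [CommSemiring R] [Semiring A]
    [Algebra R A] (x y : A) :
    Submodule.span R (Set.range ![1, x, y, x * y]) ≤
      Subalgebra.toSubmodule (Algebra.adjoin R {x, y}) := by
  have hx : x ∈ Algebra.adjoin R {x, y} := Algebra.subset_adjoin (by simp)
  have hy : y ∈ Algebra.adjoin R {x, y} := Algebra.subset_adjoin (by simp)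
  rw [Submodule.span_le, Set.range_subset_iff]
  simp [Fin.forall_fin_succ, hx, hy, mul_mem hx hy]

theorem noZeroDivisors_of_forall_isUnit {M : Type*} [MonoidWithZero M]
    (hM : ∀ a : M, a ≠ 0 → IsUnit a) : NoZeroDivisors M where
  eq_zero_or_eq_zero_of_mul_eq_zero {a _} hab :=
    or_iff_not_imp_left.2 fun ha ↦ (hM a ha).mul_right_eq_zero.1 hab

theorem quaternion_generated_by_noncommuting_general {F A : Type*} [Field F] [Ring A]
    [NoZeroDivisors A] [Algebra F A] (hA : Module.finrank F A = 4) {x y : A}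
    (hxy : ¬Commute x y) : Algebra.adjoin F {x, y} = ⊤ := by
  have hspan : Submodule.span F (Set.range ![1, x, y, x * y]) = ⊤ :=
    (linearIndependent_one_left_right_mul_of_not_commute hxy).span_eq_top_of_card_eq_finrank
      (by simp [hA])
  rw [← Algebra.toSubmodule_eq_top, eq_top_iff, ← hspan]
  exact span_one_left_right_mul_le_adjoin_pair x y

/-- A quaternion division algebra is generated as an `F`-algebra by any two
noncommuting elements. -/
theorem quaternion_generated_by_noncommuting {F : Type*} [Field F] (h2 : (2 : F) ≠ 0)
    (c₁ c₂ : F) (hdiv : ∀ z : ℍ[F, c₁, c₂], z ≠ 0 → IsUnit z)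
    (x y : ℍ[F, c₁, c₂]) (hxy : x * y ≠ y * x) :
    Algebra.adjoin F ({x, y} : Set ℍ[F, c₁, c₂]) = ⊤ := by
  have := noZeroDivisors_of_forall_isUnit hdiv
  exact quaternion_generated_by_noncommuting_general
    (QuaternionAlgebra.finrank_eq_four c₁ 0 c₂) hxy
end

section
/- Let F be a field of characteristic different from 2 and c₁, c₂ ∈ F, and suppose that D := ℍ[F, c₁, c₂] is a division ring. Then D has no 3-dimensional F-subalgebras: for every F-subalgebra S of D, Module.finrank F S ≠ 3. -/
open Quaternion

/-!
A finite-dimensional `F`-algebra without zero divisors is a division ring, so every module over it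
is free and, by the tower law, its dimension divides the dimension of every such module. A
subalgebra of a quaternion algebra therefore has dimension dividing `4` once it is a domain.
-/

theorem finrank_dvd_finrank_of_isDomain (F D M : Type*) [Field F] [Ring D] [IsDomain D]
    [Algebra F D] [Module.Finite F D] [AddCommGroup M] [Module F M] [Module D M]
    [IsScalarTower F D M] :
    Module.finrank F D ∣ Module.finrank F M := by
  let : DivisionRing D := divisionRingOfFiniteDimensional F D
  exact Module.finrank_dvd_finrank_right F D M

theorem quaternion_no_three_dim_subalgebra_general {F : Type*} [Field F] {c₁ c₂ c₃ : F}
    (S : Subalgebra F ℍ[F,c₁,c₂,c₃]) [IsDomain S] :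
    Module.finrank F S ≠ 3 := by
  intro finrank_eq_three
  have finrank_dvd := finrank_dvd_finrank_of_isDomain F S ℍ[F,c₁,c₂,c₃]
  rw [finrank_eq_three, QuaternionAlgebra.finrank_eq_four] at finrank_dvd
  norm_num at finrank_dvd

/-- A quaternion division algebra has no 3-dimensional `F`-subalgebras. -/
theorem quaternion_no_three_dim_subalgebra {F : Type*} [Field F] (h2 : (2 : F) ≠ 0)
    (c₁ c₂ : F) (hdiv : ∀ z : ℍ[F, c₁, c₂], z ≠ 0 → IsUnit z)
    (S : Subalgebra F ℍ[F, c₁, c₂]) :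
    Module.finrank F S ≠ 3 := by
  let := DivisionRing.ofIsUnitOrEqZero fun z ↦ (em (z = 0)).symm.imp_left (hdiv z)
  exact quaternion_no_three_dim_subalgebra_general S
end

section
/- There is a group homomorphism σ : Γ → Γ of the figure-8 knot group with σ(g) = g⁻¹ and σ(h) = g⁻²·h⁻¹·g², and σ satisfies σ ∘ σ = id; in particular σ is an order-2 automorphism of Γ (the automorphism induced by a 2-periodic symmetry of the figure-8 knot). -/
/-- The single relator of the figure-8 knot group, in the free group on two
generators `0 ↦ g`, `1 ↦ h`: the word `h⁻¹·g⁻¹·h·g·h⁻¹·g·h·g⁻¹·h⁻¹·g`. -/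
def fig8Rel : FreeGroup (Fin 2) :=
  (FreeGroup.of 1)⁻¹ * (FreeGroup.of 0)⁻¹ * FreeGroup.of 1 * FreeGroup.of 0 *
    (FreeGroup.of 1)⁻¹ * FreeGroup.of 0 * FreeGroup.of 1 * (FreeGroup.of 0)⁻¹ *
    (FreeGroup.of 1)⁻¹ * FreeGroup.of 0

/-- The figure-8 knot group, presented with two generators and one relation. -/
abbrev Fig8Group : Type := PresentedGroup ({fig8Rel} : Set (FreeGroup (Fin 2)))

/-- The first generator `g` of the figure-8 knot group. -/
def fig8g : Fig8Group := PresentedGroup.of 0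

/-- The second generator `h` of the figure-8 knot group. -/
def fig8h : Fig8Group := PresentedGroup.of 1

/-! The substitution `g ↦ g⁻¹`, `h ↦ g⁻² h⁻¹ g²` turns the relator into a conjugate of its own
inverse, already in the free group, so it descends to an endomorphism `σ` of the knot group. It is
an involution because `σ (g⁻² h⁻¹ g²) = g² (g⁻² h g²) g⁻² = h`. -/

section Word

variable {G : Type*} [Group G]

/-- The relator of the figure-8 knot group as a word in two elements of an arbitrary group, so that
identities between its values can be stated without reference to the free group. -/
def fig8Word (a b : G) : G :=
  b⁻¹ * a⁻¹ * b * a * b⁻¹ * a * b * a⁻¹ * b⁻¹ * a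

theorem lift_fig8Rel (f : Fin 2 → G) : FreeGroup.lift f fig8Rel = fig8Word (f 0) (f 1) := by
  simp only [fig8Rel, fig8Word, map_mul, map_inv, FreeGroup.lift_apply_of]

theorem fig8Word_inv_conj_inv (a b : G) :
    fig8Word a⁻¹ ((a ^ 2)⁻¹ * b⁻¹ * a ^ 2) = a⁻¹ * (fig8Word a b)⁻¹ * a := by
  unfold fig8Word
  group

end Word

namespace Fig8Group

theorem fig8Word_generators : fig8Word fig8g fig8h = 1 :=
  PresentedGroup.one_of_mem (Set.mem_singleton fig8Rel)

section UniversalProperty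

variable {G : Type*} [Group G]

/-- The universal property of the figure-8 knot group: the homomorphism with `g ↦ a` and `h ↦ b`,
for a pair `a`, `b` satisfying the defining relation. -/
def lift (a b : G) (hab : fig8Word a b = 1) : Fig8Group →* G :=
  PresentedGroup.toGroup (f := ![a, b]) fun r hr => by
    rw [Set.mem_singleton_iff.mp hr, lift_fig8Rel]
    exact hab

theorem lift_fig8g (a b : G) (hab : fig8Word a b = 1) : lift a b hab fig8g = a :=
  PresentedGroup.toGroup.of _

theorem lift_fig8h (a b : G) (hab : fig8Word a b = 1) : lift a b hab fig8h = b :=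
  PresentedGroup.toGroup.of _

theorem hom_ext {φ ψ : Fig8Group →* G} (hg : φ fig8g = ψ fig8g) (hh : φ fig8h = ψ fig8h) :
    φ = ψ :=
  PresentedGroup.ext (Fin.forall_fin_two.mpr ⟨hg, hh⟩)

end UniversalProperty

/-- The endomorphism `σ` of the figure-8 knot group induced by its 2-periodic symmetry. -/
def twoPeriodicHom : Fig8Group →* Fig8Group :=
  lift fig8g⁻¹ ((fig8g ^ 2)⁻¹ * fig8h⁻¹ * fig8g ^ 2) <| by
    rw [fig8Word_inv_conj_inv, fig8Word_generators, inv_one, mul_one, inv_mul_cancel]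

theorem twoPeriodicHom_fig8g : twoPeriodicHom fig8g = fig8g⁻¹ :=
  lift_fig8g _ _ _

theorem twoPeriodicHom_fig8h :
    twoPeriodicHom fig8h = (fig8g ^ 2)⁻¹ * fig8h⁻¹ * fig8g ^ 2 :=
  lift_fig8h _ _ _

theorem twoPeriodicHom_comp_self :
    twoPeriodicHom.comp twoPeriodicHom = MonoidHom.id Fig8Group := by
  apply hom_ext
  · simp only [MonoidHom.comp_apply, MonoidHom.id_apply, twoPeriodicHom_fig8g, map_inv, inv_inv]
  · simp only [MonoidHom.comp_apply, MonoidHom.id_apply, twoPeriodicHom_fig8g,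
      twoPeriodicHom_fig8h, map_mul, map_inv, map_pow]
    group

end Fig8Group

/-- The order-2 automorphism of the figure-8 knot group induced by a 2-periodic
symmetry: `σ(g) = g⁻¹`, `σ(h) = g⁻²·h⁻¹·g²`, with `σ ∘ σ = id`. -/
theorem fig8_two_periodic_automorphism :
    ∃ σ : Fig8Group →* Fig8Group,
      σ fig8g = fig8g⁻¹ ∧
      σ fig8h = (fig8g ^ 2)⁻¹ * fig8h⁻¹ * fig8g ^ 2 ∧
      σ.comp σ = MonoidHom.id Fig8Group :=
  ⟨Fig8Group.twoPeriodicHom, Fig8Group.twoPeriodicHom_fig8g,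
    Fig8Group.twoPeriodicHom_fig8h, Fig8Group.twoPeriodicHom_comp_self⟩
end

section
/- Let F be a field of characteristic zero and let s ∈ F satisfy s² = 5. Define the 2×2 matrices A := (1/2) · !![s − 1, 0; 0, s + 1] and B := (1/2) · !![s − 1, 0; −2, s + 1] over F. Then det A = 1, det B = 1, the figure-8 knot group relation holds: B⁻¹ · A⁻¹ · B · A · B⁻¹ · A · B · A⁻¹ · B⁻¹ · A = 1, the line spanned by the vector (0, 1) is invariant under both A and B (so the corresponding representation of the figure-8 knot group into SL(2, F) is reducible), and (tr A)² = 5. -/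
/-!
If `g` and `h` are lower triangular with the same diagonal `(a, d)`, `a * d = 1`, and lower left
entries `b` and `c`, then the figure-8 relator evaluates to a lower unitriangular matrix with lower
left entry `a * (c - b) * (a ^ 2 - 3 + d ^ 2)`. The last factor is the Alexander polynomial
`t - 3 + t⁻¹` of the knot at `t = a ^ 2`, and it equals `(a + d) ^ 2 - 5`. So the relation holds as
soon as the trace squares to `5`, and the diagonal entries `(s ∓ 1) / 2` are chosen for this.
-/

/-- The relator of the two-generator presentation of the figure-8 knot group, as a word in `g` and
`h`. It asks only for a multiplication and an inversion, so that it can be evaluated directly on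
square matrices, with `Matrix.inv` as inversion. -/
def fig8Relator {M : Type*} [Mul M] [Inv M] (g h : M) : M :=
  h⁻¹ * g⁻¹ * h * g * h⁻¹ * g * h * g⁻¹ * h⁻¹ * g

section CommRing

open Matrix

variable {R : Type*} [CommRing R]

theorem mulVec_mem_span_singleton {n : Type*} [Fintype n] {M : Matrix n n R} {v w : n → R} {μ : R}
    (hv : M *ᵥ v = μ • v) (hw : w ∈ Submodule.span R {v}) : M *ᵥ w ∈ Submodule.span R {v} := by
  obtain ⟨k, rfl⟩ := Submodule.mem_span_singleton.mp hw
  rw [mulVec_smul, hv, smul_smul]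
  exact Submodule.smul_mem _ _ (Submodule.mem_span_singleton_self v)

theorem lowerTriangular_mulVec_mem_span (a c d : R) {v : Fin 2 → R}
    (hv : v ∈ Submodule.span R {![0, 1]}) :
    !![a, 0; c, d] *ᵥ v ∈ Submodule.span R {![0, 1]} :=
  mulVec_mem_span_singleton (μ := d) (by ext i; fin_cases i <;> simp) hv

variable {a d : R}

theorem det_lowerTriangular_of_mul_eq_one (had : a * d = 1) (c : R) :
    !![a, 0; c, d].det = 1 := by
  rw [det_fin_two_of, zero_mul, sub_zero, had]

theorem inv_lowerTriangular_of_mul_eq_one (had : a * d = 1) (c : R) :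
    !![a, 0; c, d]⁻¹ = !![d, 0; -c, a] := by
  rw [inv_def, det_lowerTriangular_of_mul_eq_one had, Ring.inverse_one, one_smul,
    adjugate_fin_two_of, neg_zero]

theorem fig8Relator_lowerTriangular (had : a * d = 1) (b c : R) :
    fig8Relator !![a, 0; b, d] !![a, 0; c, d] =
      !![1, 0; a * (c - b) * ((a + d) ^ 2 - 5), 1] := by
  simp only [fig8Relator, inv_lowerTriangular_of_mul_eq_one had, mul_fin_two]
  congr! 4 <;> grind

theorem fig8Relator_lowerTriangular_eq_one (had : a * d = 1) (htrace : (a + d) ^ 2 = 5) (b c : R) :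
    fig8Relator !![a, 0; b, d] !![a, 0; c, d] = 1 := by
  rw [fig8Relator_lowerTriangular had, htrace, sub_self, mul_zero, one_fin_two]

theorem invOf_two_mul_sub_one_mul_invOf_two_mul_add_one [Invertible (2 : R)] {s : R}
    (hs : s ^ 2 = 5) : ⅟2 * (s - 1) * (⅟2 * (s + 1)) = 1 := by
  have htwo : (2 : R) * ⅟2 = 1 := mul_invOf_self 2
  linear_combination ⅟2 ^ 2 * hs + (2 * ⅟2 + 1) * htwo

theorem invOf_two_mul_sub_one_add_invOf_two_mul_add_one [Invertible (2 : R)] (s : R) :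
    ⅟2 * (s - 1) + ⅟2 * (s + 1) = s := by
  linear_combination s * mul_invOf_self (2 : R)

theorem fig8_reducible_representation_general [Invertible (2 : R)] (s : R) (hs : s ^ 2 = 5)
    (A B : Matrix (Fin 2) (Fin 2) R)
    (hA : A = ⅟(2 : R) • !![s - 1, 0; 0, s + 1])
    (hB : B = ⅟(2 : R) • !![s - 1, 0; -2, s + 1]) :
    A.det = 1 ∧ B.det = 1 ∧
    B⁻¹ * A⁻¹ * B * A * B⁻¹ * A * B * A⁻¹ * B⁻¹ * A = 1 ∧
    (∀ v ∈ Submodule.span R ({![0, 1]} : Set (Fin 2 → R)),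
      A.mulVec v ∈ Submodule.span R ({![0, 1]} : Set (Fin 2 → R)) ∧
      B.mulVec v ∈ Submodule.span R ({![0, 1]} : Set (Fin 2 → R))) ∧
    A.trace ^ 2 = 5 := by
  have hdet := invOf_two_mul_sub_one_mul_invOf_two_mul_add_one hs
  have htrace : (⅟2 * (s - 1) + ⅟2 * (s + 1)) ^ 2 = 5 := by
    rw [invOf_two_mul_sub_one_add_invOf_two_mul_add_one, hs]
  simp only [smul_of, smul_cons, smul_eq_mul, smul_empty, mul_zero] at hA hB
  subst hA hB
  exact ⟨det_lowerTriangular_of_mul_eq_one hdet _, det_lowerTriangular_of_mul_eq_one hdet _,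
    fig8Relator_lowerTriangular_eq_one hdet htrace _ _,
    fun v hv ↦ ⟨lowerTriangular_mulVec_mem_span _ _ _ hv, lowerTriangular_mulVec_mem_span _ _ _ hv⟩,
    by rw [trace_fin_two_of, htrace]⟩

end CommRing

/-- The reducible representations of the figure-8 knot group at the two points of the
canonical component with `I_g² = 5`: the matrices `A`, `B` have determinant `1`,
satisfy the figure-8 knot group relation, preserve the line spanned by `(0, 1)`, and
`(tr A)² = 5`. -/
theorem fig8_reducible_representation {F : Type*} [Field F] [CharZero F]
    (s : F) (hs : s ^ 2 = 5)
    (A B : Matrix (Fin 2) (Fin 2) F)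
    (hA : A = (1 / 2 : F) • !![s - 1, 0; 0, s + 1])
    (hB : B = (1 / 2 : F) • !![s - 1, 0; -2, s + 1]) :
    A.det = 1 ∧ B.det = 1 ∧
    B⁻¹ * A⁻¹ * B * A * B⁻¹ * A * B * A⁻¹ * B⁻¹ * A = 1 ∧
    (∀ v ∈ Submodule.span F ({![0, 1]} : Set (Fin 2 → F)),
      A.mulVec v ∈ Submodule.span F ({![0, 1]} : Set (Fin 2 → F)) ∧
      B.mulVec v ∈ Submodule.span F ({![0, 1]} : Set (Fin 2 → F))) ∧
    A.trace ^ 2 = 5 := by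
  have := invertibleOfNonzero (two_ne_zero (α := F))
  exact fig8_reducible_representation_general s hs A B (by rwa [invOf_eq_inv, ← one_div])
    (by rwa [invOf_eq_inv, ← one_div])
end
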